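/- (Theorem: implicit equations of the QS_t model.) Let G be a finite undirected simple graph on vertex set {1,…,I}, and let K = ℚ(t) be the field of rational functions in the variable t. Consider the K-algebra homomorphism φ from the polynomial ring K[p_{ij}, p_{ji} : {i,j} ∈ E(G)] to the polynomial ring K[x_e (e ∈ E(G)), a_1,…,a_I] sending p_{ij} ↦ x_{{i,j}}·(1 + a_i − t·a_j) for each directed edge (i,j). Then the kernel of φ is generated, as an ideal, by the cycle polynomials P^C, where C runs over all cycles of G (sequences of distinct vertices v_1,…,v_n, n ≥ 3, with {v_k,v_{k+1}} ∈ E(G) for k < n and {v_n,v_1} ∈ E(G)). -/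

import Mathlib

/-- Cyclic successor on `Fin n`. -/
def cycSucc {n : ℕ} (k : Fin n) : Fin n :=
  ⟨(k.val + 1) % n, Nat.mod_lt _ k.pos⟩

/-- The coefficient `coeff(δ) ∈ R` (with `t ∈ R`) attached to an orientation
`δ` of the `n`-cycle, encoded as `δ : Fin n → Bool` where `δ k = true` means the
`k`-th edge is oriented in agreement with the distinguished directed cycle. -/
noncomputable def cycleCoeff {R : Type*} [CommRing R] (t : R) {n : ℕ}
    (δ : Fin n → Bool) : R :=
  let c : ℤ := 2 * ((Finset.univ.filter fun k => δ k = true).card : ℤ) - (n : ℤ)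
  if c = 0 then 0
  else (if 0 < c then 1 else -1) *
    (if n % 2 = 0 then
      ∑ m ∈ Finset.range (c.natAbs / 2), t ^ ((n - c.natAbs) / 2 + 2 * m)
    else
      ∑ m ∈ Finset.range c.natAbs, t ^ ((n - c.natAbs) / 2 + m))

/-- The cycle polynomial `P^C = Σ_δ coeff(δ)·p^δ` of the `n`-cycle with vertices
`v 0, …, v (n-1)`, evaluated at `t : R` and coordinates `p : V → V → R`. -/
noncomputable def cyclePoly {R : Type*} [CommRing R] {V : Type*} (t : R) (n : ℕ)
    (v : Fin n → V) (p : V → V → R) : R :=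
  ∑ δ : Fin n → Bool, cycleCoeff t δ *
    ∏ k : Fin n, if δ k then p (v k) (v (cycSucc k)) else p (v (cycSucc k)) (v k)

section Helpers

lemma cycleCoeff_mul {R : Type*} [CommRing R] (t : R) {n : ℕ} (δ : Fin n → Bool) :
    (if n % 2 = 0 then 1 - t ^ 2 else 1 - t) * cycleCoeff t δ =
      t ^ (n - (Finset.univ.filter fun k => δ k = true).card)
        - t ^ (Finset.univ.filter fun k => δ k = true).card := by
  have hm : (Finset.univ.filter fun k => δ k = true).card ≤ n := by
    simpa using Finset.card_le_univ (Finset.univ.filter fun k => δ k = true)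
  unfold cycleCoeff
  generalize (Finset.univ.filter fun k => δ k = true).card = m at hm ⊢
  have key : ∀ a b : ℕ, a ≤ b → a + b = n →
      (if n % 2 = 0 then 1 - t ^ 2 else 1 - t) *
      (if n % 2 = 0 then
      ∑ m ∈ Finset.range ((b - a) / 2), t ^ (a + 2 * m)
    else
      ∑ m ∈ Finset.range (b - a), t ^ (a + m)) = t ^ a - t ^ b := by
    intro a b hab hn
    split_ifs with h
    · simp only [pow_add, pow_mul, ← Finset.mul_sum]
      have h1 := mul_neg_geom_sum (t ^ 2) ((b - a) / 2)
      have h2 : t ^ b = t ^ a * (t ^ 2) ^ ((b - a) / 2) := by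
        rw [← pow_mul, ← pow_add]; congr 1; omega
      rw [h2]
      linear_combination t ^ a * h1
    · simp only [pow_add, ← Finset.mul_sum]
      have h1 := mul_neg_geom_sum t (b - a)
      have h2 : t ^ b = t ^ a * t ^ (b - a) := by
        rw [← pow_add]; congr 1; omega
      rw [h2]
      linear_combination t ^ a * h1
  dsimp only
  by_cases h0 : (2 * (m : ℤ) - n) = 0
  · rw [if_pos h0]
    have : n - m = m := by omega
    simp [this]
  · rw [if_neg h0]
    by_cases h1 : 0 < (2 * (m : ℤ) - n)
    · rw [if_pos h1, one_mul]
      have e1 : (2 * (m : ℤ) - n).natAbs = m - (n - m) := by omega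
      have e2 : (n - (m - (n - m))) / 2 = n - m := by omega
      rw [e1, e2]
      exact key (n - m) m (by omega) (by omega)
    · rw [if_neg h1]
      have e1 : (2 * (m : ℤ) - n).natAbs = (n - m) - m := by omega
      have e2 : (n - ((n - m) - m)) / 2 = m := by omega
      rw [e1, e2]
      linear_combination - key m (n - m) (by omega) (by omega)

lemma prod_add_bool {R : Type*} [CommRing R] {n : ℕ} (a b : Fin n → R) :
    ∏ k, (a k + b k) = ∑ δ : Fin n → Bool, ∏ k, if δ k then a k else b k := by
  have := Finset.prod_univ_sum (fun _ : Fin n => (Finset.univ : Finset Bool))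
    (fun k c => if c then a k else b k)
  rw [Fintype.piFinset_univ] at this
  simpa using this

lemma cyclePoly_mul {R : Type*} [CommRing R] {V : Type*} (t : R) (n : ℕ)
    (v : Fin n → V) (p : V → V → R) :
    (if n % 2 = 0 then 1 - t ^ 2 else 1 - t) * cyclePoly t n v p =
      ∏ k, (p (v k) (v (cycSucc k)) + t * p (v (cycSucc k)) (v k))
      - ∏ k, (p (v (cycSucc k)) (v k) + t * p (v k) (v (cycSucc k))) := by
  have h2 : ∏ k, (p (v (cycSucc k)) (v k) + t * p (v k) (v (cycSucc k))) =
    ∏ k, (t * p (v k) (v (cycSucc k)) + p (v (cycSucc k)) (v k)) := by simp only [add_comm]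
  rw [h2, prod_add_bool, prod_add_bool, ← Finset.sum_sub_distrib]
  unfold cyclePoly
  rw [Finset.mul_sum]
  refine Finset.sum_congr rfl fun δ _ => ?_
  rw [← mul_assoc, cycleCoeff_mul, sub_mul]
  congr 1
  · have : (n - (Finset.univ.filter fun k => δ k = true).card)
        = (Finset.univ.filter fun k => ¬ δ k = true).card := by
      have := Finset.card_filter_add_card_filter_not (s := (Finset.univ : Finset (Fin n)))
        (fun k => δ k = true)
      simp only [Finset.card_univ, Fintype.card_fin] at this
      omega
    rw [this, ← Finset.prod_const, Finset.prod_filter, ← Finset.prod_mul_distrib]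
    refine Finset.prod_congr rfl fun k _ => ?_
    by_cases h : δ k = true <;> simp [h]
  · rw [← Finset.prod_const, Finset.prod_filter, ← Finset.prod_mul_distrib]
    refine Finset.prod_congr rfl fun k _ => ?_
    by_cases h : δ k = true <;> simp [h]

lemma exists_cycle {V : Type*} [Fintype V] (w : V → V → ℤ) (hw : ∀ i j, w i j = - w j i)
    (hs : ∀ i, ∑ j, w i j = 0) (i₀ j₀ : V) (h0 : 0 < w i₀ j₀) :
    ∃ (n : ℕ) (_ : 3 ≤ n) (v : Fin n → V), Function.Injective v ∧
      ∀ k, 0 < w (v k) (v (cycSucc k)) := by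
  classical
  have step : ∀ j : {j : V // ∃ i, 0 < w i j}, ∃ k : {j : V // ∃ i, 0 < w i j},
      0 < w j.1 k.1 := by
    rintro ⟨j, i, hi⟩
    by_contra hcon
    push Not at hcon
    have hle : ∀ k, w j k ≤ 0 := by
      intro k
      by_contra hk
      push Not at hk
      exact absurd (hcon ⟨k, j, hk⟩) (by simpa using hk)
    have : ∑ k, w j k < ∑ k : V, (0 : ℤ) :=
      Finset.sum_lt_sum (fun k _ => hle k) ⟨i, Finset.mem_univ _, by rw [hw]; omega⟩
    rw [hs] at this
    simp at this
  choose f hf using step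
  obtain ⟨m, n, hmn, heq⟩ :=
    Finite.exists_ne_map_eq_of_infinite (fun k : ℕ => f^[k] ⟨j₀, i₀, h0⟩)
  have hper : ∃ x, x ∈ Function.periodicPts f := by
    wlog hlt : m < n generalizing m n
    · exact this n m hmn.symm heq.symm (by omega)
    refine ⟨f^[m] ⟨j₀, i₀, h0⟩, n - m, by omega, ?_⟩
    change f^[n - m] (f^[m] _) = _
    rw [← Function.iterate_add_apply]
    rw [show n - m + m = n by omega]
    exact heq.symm
  obtain ⟨x, hx⟩ := hper
  have hpos := Function.minimalPeriod_pos_of_mem_periodicPts hx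
  have hcyc : ∀ k : Fin (Function.minimalPeriod f x),
      0 < w (f^[k.1] x).1 (f^[(cycSucc k).1] x).1 := by
    intro k
    have : f^[(cycSucc k).1] x = f (f^[k.1] x) := by
      simp only [cycSucc]
      rw [Function.iterate_mod_minimalPeriod_eq, Function.iterate_succ_apply']
    rw [this]
    exact hf _
  refine ⟨Function.minimalPeriod f x, ?_, fun k => (f^[k.1] x).1, ?_, hcyc⟩
  · have hp := Function.iterate_minimalPeriod (f := f) (x := x)
    by_contra hlt
    have : Function.minimalPeriod f x = 1 ∨ Function.minimalPeriod f x = 2 := by omega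
    have h1 := hf x
    have h2 := hf (f x)
    rcases this with h | h <;> rw [h] at hp
    · simp only [Function.iterate_one] at hp
      rw [hp] at h1
      have := hw x.1 x.1
      omega
    · simp only [Function.iterate_succ, Function.iterate_zero, Function.comp, id] at hp
      rw [hp] at h2
      have := hw x.1 (f x).1
      omega
  · intro a b hab
    have := Function.iterate_injOn_Iio_minimalPeriod (f := f) (x := x)
      (Set.mem_Iio.2 a.2) (Set.mem_Iio.2 b.2) (Subtype.ext hab)
    exact Fin.ext this

open MvPolynomial

lemma ker_monomial_le {K σ τ : Type*} [Field K] (A : (σ →₀ ℕ) → (τ →₀ ℕ))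
    (μ : MvPolynomial σ K →ₐ[K] MvPolynomial τ K)
    (hμ : ∀ u, μ (monomial u 1) = monomial (A u) 1)
    (J : Ideal (MvPolynomial σ K))
    (hJ : ∀ u v, A u = A v → (monomial u 1 - monomial v 1 : MvPolynomial σ K) ∈ J)
    (f : MvPolynomial σ K) (hf : μ f = 0) : f ∈ J := by
  classical
  let r : (τ →₀ ℕ) → (σ →₀ ℕ) := fun d => if h : ∃ u, A u = d then h.choose else 0
  have hr : ∀ u, A (r (A u)) = A u := by
    intro u
    have h : ∃ u', A u' = A u := ⟨u, rfl⟩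
    simp only [r, dif_pos h]
    exact h.choose_spec
  let L : MvPolynomial τ K →ₗ[K] MvPolynomial σ K :=
    (basisMonomials τ K).constr K (fun d => monomial (r d) 1)
  have hL : ∀ d, L (monomial d 1) = monomial (r d) 1 := by
    intro d
    have := (basisMonomials τ K).constr_basis K (fun d => (monomial (r d) 1 : MvPolynomial σ K)) d
    simpa using this
  have key : ∀ g, g - L (μ g) ∈ J := by
    intro g
    induction g using MvPolynomial.induction_on' with
    | monomial u a =>
      have h1 : (monomial u a : MvPolynomial σ K) = a • monomial u 1 := by
        rw [smul_monomial]; simp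
      rw [h1, map_smul, map_smul, hμ, hL, ← smul_sub, smul_eq_C_mul]
      exact J.mul_mem_left _ (hJ _ _ (hr u).symm)
    | add p q hp hq =>
      rw [map_add, map_add, add_sub_add_comm]
      exact J.add_mem hp hq
  have := key f
  rwa [hf, map_zero, sub_zero] at this


lemma cycSucc_bijective (n : ℕ) : Function.Bijective (cycSucc : Fin n → Fin n) := by
  rw [← Finite.injective_iff_bijective]
  intro a b hab
  have h : (a.val + 1) % n = (b.val + 1) % n := congrArg Fin.val hab
  have ha := a.2
  have hb := b.2
  apply Fin.ext
  rcases Nat.lt_or_ge (a.val + 1) n with h1 | h1 <;>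
    rcases Nat.lt_or_ge (b.val + 1) n with h2 | h2
  · rw [Nat.mod_eq_of_lt h1, Nat.mod_eq_of_lt h2] at h; omega
  · have : b.val + 1 = n := by omega
    rw [Nat.mod_eq_of_lt h1, this, Nat.mod_self] at h; omega
  · have : a.val + 1 = n := by omega
    rw [Nat.mod_eq_of_lt h2, this, Nat.mod_self] at h; omega
  · omega

lemma sum_single_le {E : Type*} {n : ℕ} (g : Fin n → E) (hg : Function.Injective g)
    (u : E →₀ ℕ) (hu : ∀ k, 1 ≤ u (g k)) : (∑ k, Finsupp.single (g k) 1) ≤ u := by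
  classical
  intro e
  rw [Finsupp.finsetSum_apply]
  by_cases he : ∃ k, g k = e
  · obtain ⟨k, rfl⟩ := he
    rw [Finset.sum_eq_single k]
    · simpa using hu k
    · intro b _ hb
      exact Finsupp.single_eq_of_ne (fun h => hb (hg h).symm)
    · simp
  · rw [Finset.sum_eq_zero]
    · exact Nat.zero_le _
    · intro k _
      exact Finsupp.single_eq_of_ne (fun h => he ⟨k, h.symm⟩)

variable {V : Type*} (G : SimpleGraph V)

/-- Exponent vector of the toric monomial `x_e b_i`. -/
noncomputable def toricExp (e : {e : V × V // G.Adj e.1 e.2}) : (Sym2 V ⊕ V) →₀ ℕ :=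
  Finsupp.single (Sum.inl s(e.1.1, e.1.2)) 1 + Finsupp.single (Sum.inr e.1.1) 1

/-- The exponent map of the toric parametrization. -/
noncomputable def toricMap :
    ({e : V × V // G.Adj e.1 e.2} →₀ ℕ) →ₗ[ℕ] ((Sym2 V ⊕ V) →₀ ℕ) :=
  Finsupp.linearCombination ℕ (toricExp G)

lemma toricMap_inl (u : {e : V × V // G.Adj e.1 e.2} →₀ ℕ) (i j : V) (h : G.Adj i j) :
    toricMap G u (Sum.inl s(i, j)) = u ⟨(i, j), h⟩ + u ⟨(j, i), h.symm⟩ := by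
  classical
  induction u using Finsupp.induction_linear with
  | zero => simp
  | add f g hf hg => rw [map_add, Finsupp.add_apply, hf, hg]; simp only [Finsupp.add_apply]; ring
  | single e m =>
    obtain ⟨⟨a, b⟩, he⟩ := e
    have hne := h.ne
    simp only [toricMap, toricExp, Finsupp.linearCombination_single, Finsupp.smul_apply,
      Finsupp.add_apply, Finsupp.single_apply, Sum.inl.injEq, Sym2.eq_iff, Subtype.mk.injEq,
      Prod.mk.injEq, reduceCtorEq, if_false, smul_eq_mul]
    by_cases h1 : a = i ∧ b = j
    · obtain ⟨rfl, rfl⟩ := h1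
      simp [hne]
    · simp [h1]

open Classical in
lemma toricMap_inr [Fintype V] (u : {e : V × V // G.Adj e.1 e.2} →₀ ℕ) (i : V) :
    toricMap G u (Sum.inr i) = ∑ j, if h : G.Adj i j then u ⟨(i, j), h⟩ else 0 := by
  induction u using Finsupp.induction_linear with
  | zero => simp
  | add f g hf hg =>
    rw [map_add, Finsupp.add_apply, hf, hg, ← Finset.sum_add_distrib]
    refine Finset.sum_congr rfl fun j _ => ?_
    split_ifs <;> simp
  | single e m =>
    obtain ⟨⟨a, b⟩, he⟩ := e
    simp only [toricMap, toricExp, Finsupp.linearCombination_single, Finsupp.smul_apply,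
      Finsupp.add_apply, Finsupp.single_apply, Sum.inr.injEq, Subtype.mk.injEq,
      Prod.mk.injEq, reduceCtorEq, if_false, smul_eq_mul]
    by_cases h1 : a = i
    · subst h1
      rw [Finset.sum_eq_single b]
      · simp only [true_and, if_true, dif_pos he]; simp
      · intro c _ hc
        split_ifs <;> simp_all
      · simp
    · simp [h1]

/-- The exponent of the forward cycle monomial. -/
noncomputable def fwd {n : ℕ} (v : Fin n → V) (h : ∀ k, G.Adj (v k) (v (cycSucc k))) :
    {e : V × V // G.Adj e.1 e.2} →₀ ℕ :=
  ∑ k, Finsupp.single ⟨(v k, v (cycSucc k)), h k⟩ 1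

/-- The exponent of the backward cycle monomial. -/
noncomputable def bwd {n : ℕ} (v : Fin n → V) (h : ∀ k, G.Adj (v k) (v (cycSucc k))) :
    {e : V × V // G.Adj e.1 e.2} →₀ ℕ :=
  ∑ k, Finsupp.single ⟨(v (cycSucc k), v k), (h k).symm⟩ 1

lemma toricMap_fwd_eq {n : ℕ} (v : Fin n → V) (h : ∀ k, G.Adj (v k) (v (cycSucc k))) :
    toricMap G (fwd G v h) = toricMap G (bwd G v h) := by
  simp only [toricMap, fwd, bwd, map_sum, Finsupp.linearCombination_single, one_smul, toricExp,
    Finset.sum_add_distrib]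
  congr 1
  · simp only [Sym2.eq_swap]
  · exact ((cycSucc_bijective n).sum_comp
      (fun k => (Finsupp.single (Sum.inr (v k)) 1 : (Sym2 V ⊕ V) →₀ ℕ))).symm

lemma toric_binomial_mem [Fintype V] {K : Type*} [Field K]
    (J : Ideal (MvPolynomial {e : V × V // G.Adj e.1 e.2} K))
    (hJ : ∀ (n : ℕ) (_ : 3 ≤ n) (v : Fin n → V) (_ : Function.Injective v)
      (h : ∀ k, G.Adj (v k) (v (cycSucc k))),
      (monomial (fwd G v h) 1 - monomial (bwd G v h) 1 :
        MvPolynomial {e : V × V // G.Adj e.1 e.2} K) ∈ J) :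
    ∀ (d : ℕ) (u u' : {e : V × V // G.Adj e.1 e.2} →₀ ℕ), u.degree = d →
      toricMap G u = toricMap G u' → (monomial u 1 - monomial u' 1 :
        MvPolynomial {e : V × V // G.Adj e.1 e.2} K) ∈ J := by
  classical
  intro d
  induction d using Nat.strong_induction_on with
  | _ d ih =>
  intro u u' hd huu
  by_cases heq : u = u'
  · simp [heq]
  let w : V → V → ℤ := fun i j =>
    if h : G.Adj i j then (u ⟨(i, j), h⟩ : ℤ) - u' ⟨(i, j), h⟩ else 0
  have hw : ∀ i j, w i j = - w j i := by
    intro i j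
    by_cases h : G.Adj i j
    · have h1 := toricMap_inl G u i j h
      have h2 := toricMap_inl G u' i j h
      rw [huu] at h1
      simp only [w, dif_pos h, dif_pos h.symm]
      omega
    · have h' : ¬ G.Adj j i := fun hh => h hh.symm
      simp [w, h, h']
  have hs : ∀ i, ∑ j, w i j = 0 := by
    intro i
    have h1 := toricMap_inr G u i
    have h2 := toricMap_inr G u' i
    rw [huu, h2] at h1
    have h3 : ∀ j, w i j = ((if h : G.Adj i j then u ⟨(i, j), h⟩ else 0 : ℕ) : ℤ)
        - ((if h : G.Adj i j then u' ⟨(i, j), h⟩ else 0 : ℕ) : ℤ) := by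
      intro j
      by_cases h : G.Adj i j <;> simp [w, h]
    simp only [h3, Finset.sum_sub_distrib]
    rw [← Nat.cast_sum, ← Nat.cast_sum, h1, sub_self]
  have hpos : ∃ i j, 0 < w i j := by
    obtain ⟨⟨⟨i, j⟩, h⟩, hne⟩ := Finsupp.ne_iff.1 heq
    have h1 : w i j = (u ⟨(i, j), h⟩ : ℤ) - u' ⟨(i, j), h⟩ := dif_pos h
    rcases lt_or_ge 0 (w i j) with h2 | h2
    · exact ⟨i, j, h2⟩
    · refine ⟨j, i, ?_⟩
      rw [hw]
      omega
  obtain ⟨i, j, hij⟩ := hpos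
  obtain ⟨n, hn, v, hv, hc⟩ := exists_cycle w hw hs i j hij
  have hadj : ∀ k, G.Adj (v k) (v (cycSucc k)) := by
    intro k
    by_contra h
    have := hc k
    simp [w, h] at this
  have hle : fwd G v hadj ≤ u := by
    refine sum_single_le _ ?_ _ ?_
    · intro a b hab
      simp only [Subtype.mk.injEq, Prod.mk.injEq] at hab
      exact hv hab.1
    · intro k
      have := hc k
      simp only [w, dif_pos (hadj k)] at this
      omega
  have hle' : bwd G v hadj ≤ u' := by
    refine sum_single_le _ ?_ _ ?_
    · intro a b hab
      simp only [Subtype.mk.injEq, Prod.mk.injEq] at hab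
      exact hv hab.2
    · intro k
      have := hc k
      rw [hw] at this
      simp only [w, dif_pos (hadj k).symm] at this
      omega
  obtain ⟨r, rfl⟩ := exists_add_of_le hle
  obtain ⟨r', rfl⟩ := exists_add_of_le hle'
  have hdeg : (fwd G v hadj).degree = n := by
    simp [fwd]
  have hr : toricMap G r = toricMap G r' := by
    rw [map_add, map_add, toricMap_fwd_eq] at huu
    exact add_left_cancel huu
  have hlt : r.degree < d := by
    rw [← hd, map_add, hdeg]; omega
  have hI := ih _ hlt r r' rfl hr
  have hC := hJ n hn v hv hadj
  have hm : ∀ a b : {e : V × V // G.Adj e.1 e.2} →₀ ℕ,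
      (monomial (a + b) 1 : MvPolynomial {e : V × V // G.Adj e.1 e.2} K)
        = monomial a 1 * monomial b 1 := by
    intro a b; rw [monomial_mul, one_mul]
  rw [hm, hm]
  have : ∀ a b c e : MvPolynomial {e : V × V // G.Adj e.1 e.2} K,
      a * b - c * e = b * (a - c) + c * (b - e) := by intros; ring
  rw [this]
  exact J.add_mem (J.mul_mem_left _ hC) (J.mul_mem_left _ hI)

lemma qs_general [Fintype V] [DecidableRel G.Adj] {K : Type*} [Field K] (t : K) (h1 : 1 + t ≠ 0)
    (h2 : 1 - t ≠ 0) :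
    RingHom.ker
      ((aeval (R := K)
          (fun e : {e : V × V // G.Adj e.1 e.2} =>
            (X (Sum.inl s(e.1.1, e.1.2)) *
              (1 + X (Sum.inr e.1.1) - C t * X (Sum.inr e.1.2)) :
              MvPolynomial (Sym2 V ⊕ V) K))).toRingHom)
    = Ideal.span
        { P : MvPolynomial {e : V × V // G.Adj e.1 e.2} K |
          ∃ (n : ℕ) (_ : 3 ≤ n) (v : Fin n → V),
            Function.Injective v ∧ (∀ k, G.Adj (v k) (v (cycSucc k))) ∧
            P = cyclePoly (C t) n v
                  (fun i j =>
                    if h : G.Adj i j then X ⟨(i, j), h⟩ else 0) } := by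
  classical
  set φ := aeval (R := K)
          (fun e : {e : V × V // G.Adj e.1 e.2} =>
            (X (Sum.inl s(e.1.1, e.1.2)) *
              (1 + X (Sum.inr e.1.1) - C t * X (Sum.inr e.1.2)) :
              MvPolynomial (Sym2 V ⊕ V) K)) with hφ
  have h3 : (1 - t ^ 2) ≠ 0 := by
    have : 1 - t ^ 2 = (1 + t) * (1 - t) := by ring
    rw [this]; exact mul_ne_zero h1 h2
  have hφX : ∀ i j (h : G.Adj i j), φ (X ⟨(i, j), h⟩ + C t * X ⟨(j, i), h.symm⟩) =
      X (Sum.inl s(i, j)) * (C (1 + t) * (1 + C (1 - t) * X (Sum.inr i))) := by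
    intro i j h
    have hs : s(j, i) = s(i, j) := Sym2.eq_swap
    simp only [hφ, map_add, map_mul, aeval_X, algHom_C, hs, algebraMap_eq, map_sub, map_one]
    ring
  have hp : ∀ {n : ℕ} (v : Fin n → V) (h : ∀ k, G.Adj (v k) (v (cycSucc k))),
      (if n % 2 = 0 then 1 - C t ^ 2 else 1 - C t) * cyclePoly (C t) n v (fun i j =>
        if h : G.Adj i j then X ⟨(i, j), h⟩ else 0) =
      ∏ k, (X ⟨(v k, v (cycSucc k)), h k⟩ + C t * X ⟨(v (cycSucc k), v k), (h k).symm⟩)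
      - ∏ k, (X ⟨(v (cycSucc k), v k), (h k).symm⟩ + C t * X ⟨(v k, v (cycSucc k)), h k⟩ :
        MvPolynomial {e : V × V // G.Adj e.1 e.2} K) := by
    intro n v h
    rw [cyclePoly_mul]
    have hX : ∀ k, (if h : G.Adj (v k) (v (cycSucc k)) then X ⟨(v k, v (cycSucc k)), h⟩ else 0 :
        MvPolynomial {e : V × V // G.Adj e.1 e.2} K) = X ⟨(v k, v (cycSucc k)), h k⟩ :=
      fun k => dif_pos (h k)
    have hX' : ∀ k, (if h : G.Adj (v (cycSucc k)) (v k) then X ⟨(v (cycSucc k), v k), h⟩ else 0 :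
        MvPolynomial {e : V × V // G.Adj e.1 e.2} K) = X ⟨(v (cycSucc k), v k), (h k).symm⟩ :=
      fun k => dif_pos (h k).symm
    simp only [hX, hX']
  apply le_antisymm
  · intro f hf
    replace hf : φ f = 0 := hf
    set J := Ideal.span
        { P : MvPolynomial {e : V × V // G.Adj e.1 e.2} K |
          ∃ (n : ℕ) (_ : 3 ≤ n) (v : Fin n → V),
            Function.Injective v ∧ (∀ k, G.Adj (v k) (v (cycSucc k))) ∧
            P = cyclePoly (C t) n v
                  (fun i j =>
                    if h : G.Adj i j then X ⟨(i, j), h⟩ else 0) } with hJdef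
    let rev : {e : V × V // G.Adj e.1 e.2} → {e : V × V // G.Adj e.1 e.2} :=
      fun e => ⟨(e.1.2, e.1.1), e.2.symm⟩
    let θ : MvPolynomial {e : V × V // G.Adj e.1 e.2} K →ₐ[K]
        MvPolynomial {e : V × V // G.Adj e.1 e.2} K :=
      aeval (fun e => X e + C t * X (rev e))
    let θ' : MvPolynomial {e : V × V // G.Adj e.1 e.2} K →ₐ[K]
        MvPolynomial {e : V × V // G.Adj e.1 e.2} K :=
      aeval (fun e => C ((1 - t ^ 2)⁻¹) * (X e - C t * X (rev e)))
    let ψ : MvPolynomial (Sym2 V ⊕ V) K →ₐ[K] MvPolynomial (Sym2 V ⊕ V) K :=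
      aeval (Sum.elim (fun e => C ((1 + t)⁻¹) * X (Sum.inl e))
        (fun i => C ((1 - t)⁻¹) * (X (Sum.inr i) - 1)))
    let μ := (ψ.comp φ).comp θ
    have hθθ : ∀ g, θ (θ' g) = g := by
      intro g
      have : θ.comp θ' = AlgHom.id K _ := by
        ext1 e
        have hc : (C (1 - t ^ 2)⁻¹ * C (1 - t ^ 2) :
          MvPolynomial {e : V × V // G.Adj e.1 e.2} K) = 1 := by
          rw [← C_mul, inv_mul_cancel₀ h3, C_1]
        have hrr : rev (rev e) = e := rfl
        simp only [AlgHom.comp_apply, θ, θ', aeval_X, map_mul, map_sub, algHom_C, algebraMap_eq,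
          hrr, AlgHom.id_apply]
        simp only [map_sub, map_one, map_pow] at hc
        linear_combination X e * hc
      exact DFunLike.congr_fun this g
    have hμX : ∀ e, μ (X e) = monomial (toricExp G e) 1 := by
      rintro ⟨⟨i, j⟩, h⟩
      have hθX : θ (X ⟨(i, j), h⟩) = X ⟨(i, j), h⟩ + C t * X ⟨(j, i), h.symm⟩ := by
        simp [θ, rev]
      have hm : (monomial (toricExp G ⟨(i, j), h⟩) 1 : MvPolynomial (Sym2 V ⊕ V) K) =
          X (Sum.inl s(i, j)) * X (Sum.inr i) := by
        simp only [X, toricExp, monomial_mul, one_mul]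
      have hc1 : (C (1 + t)⁻¹ * C (1 + t) : MvPolynomial (Sym2 V ⊕ V) K) = 1 := by
          rw [← C_mul, inv_mul_cancel₀ h1, C_1]
      have hc2 : (C (1 - t)⁻¹ * C (1 - t) : MvPolynomial (Sym2 V ⊕ V) K) = 1 := by
          rw [← C_mul, inv_mul_cancel₀ h2, C_1]
      simp only [μ, AlgHom.comp_apply]
      rw [hθX, hφX, hm]
      have hψC : ∀ a : K, ψ (C a) = C a := fun a => by simp [ψ]
      have hψl : ψ (X (Sum.inl s(i, j))) = C ((1 + t)⁻¹) * X (Sum.inl s(i, j)) := by simp [ψ]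
      have hψr : ψ (X (Sum.inr i)) = C ((1 - t)⁻¹) * (X (Sum.inr i) - 1) := by simp [ψ]
      rw [map_mul, map_mul, hψC, map_add ψ, map_mul, hψC, hψl, hψr, map_one]
      linear_combination (X (Sum.inl s(i, j)) * (1 + C (1 - t) * (C (1 - t)⁻¹ *
        (X (Sum.inr i) - 1)))) * hc1 + X (Sum.inl s(i, j)) * (X (Sum.inr i) - 1) * hc2
    have hμ : ∀ u, μ (monomial u 1) = monomial (toricMap G u) 1 := by
      intro u
      induction u using Finsupp.induction_linear with
      | zero => simp
      | add f g hf hg =>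
        have e1 : (monomial (f + g) 1 : MvPolynomial {e : V × V // G.Adj e.1 e.2} K)
            = monomial f 1 * monomial g 1 := by rw [monomial_mul, one_mul]
        rw [e1, map_mul, hf, hg, map_add, monomial_mul, one_mul]
      | single e m =>
        rw [← X_pow_eq_monomial, map_pow, hμX, monomial_pow, one_pow, toricMap,
          Finsupp.linearCombination_single]
    have hbin : ∀ (n : ℕ) (_ : 3 ≤ n) (v : Fin n → V) (_ : Function.Injective v)
      (h : ∀ k, G.Adj (v k) (v (cycSucc k))),
      (monomial (fwd G v h) 1 - monomial (bwd G v h) 1 :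
        MvPolynomial {e : V × V // G.Adj e.1 e.2} K) ∈ J.comap θ := by
      intro n hn v hv h
      rw [Ideal.mem_comap]
      have e1 : (monomial (fwd G v h) 1 : MvPolynomial {e : V × V // G.Adj e.1 e.2} K) =
          ∏ k, X ⟨(v k, v (cycSucc k)), h k⟩ := by
        rw [fwd, monomial_sum_one]; rfl
      have e2 : (monomial (bwd G v h) 1 : MvPolynomial {e : V × V // G.Adj e.1 e.2} K) =
          ∏ k, X ⟨(v (cycSucc k), v k), (h k).symm⟩ := by
        rw [bwd, monomial_sum_one]; rfl
      rw [e1, e2, map_sub, map_prod, map_prod]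
      simp only [θ, aeval_X, rev]
      rw [← hp v h]
      exact J.mul_mem_left _ (Ideal.subset_span ⟨n, hn, v, hv, h, rfl⟩)
    have hg : θ' f ∈ J.comap θ := by
      refine ker_monomial_le (toricMap G) μ hμ _
        (fun u v huv => toric_binomial_mem G _ hbin _ u v rfl huv) _ ?_
      simp only [μ, AlgHom.comp_apply, hθθ, hf, map_zero]
    rwa [Ideal.mem_comap, hθθ] at hg
  · rw [Ideal.span_le]
    rintro P ⟨n, hn, v, hv, h, rfl⟩
    change φ _ = 0
    have := congrArg φ (hp v h)
    rw [map_mul, map_sub, map_prod, map_prod] at this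
    have hR : ∀ k, φ (X ⟨(v (cycSucc k), v k), (h k).symm⟩ +
        C t * X ⟨(v k, v (cycSucc k)), h k⟩) = X (Sum.inl s(v k, v (cycSucc k))) *
          (C (1 + t) * (1 + C (1 - t) * X (Sum.inr (v (cycSucc k))))) := by
      intro k
      rw [hφX _ _ (h k).symm, Sym2.eq_swap]
    have hL : ∀ k, φ (X ⟨(v k, v (cycSucc k)), h k⟩ +
        C t * X ⟨(v (cycSucc k), v k), (h k).symm⟩) = X (Sum.inl s(v k, v (cycSucc k))) *
          (C (1 + t) * (1 + C (1 - t) * X (Sum.inr (v k)))) :=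
      fun k => hφX _ _ (h k)
    rw [Finset.prod_congr rfl (fun k _ => hL k), Finset.prod_congr rfl (fun k _ => hR k)] at this
    rw [Finset.prod_mul_distrib, Finset.prod_mul_distrib, Finset.prod_mul_distrib,
      Finset.prod_mul_distrib,
      (cycSucc_bijective n).prod_comp (fun k => (1 + C (1 - t) * X (Sum.inr (v k)) :
        MvPolynomial (Sym2 V ⊕ V) K)), sub_self] at this
    refine (mul_eq_zero.1 this).resolve_left ?_
    have hφC : φ (C t) = C t := by simp [hφ]
    have e1 : (1 - C t ^ 2 : MvPolynomial (Sym2 V ⊕ V) K) = C (1 - t ^ 2) := by simp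
    have e2 : (1 - C t : MvPolynomial (Sym2 V ⊕ V) K) = C (1 - t) := by simp
    split_ifs
    · rw [map_sub, map_one, map_pow, hφC, e1]
      simpa only [ne_eq, C_eq_zero] using h3
    · rw [map_sub, map_one, hφC, e2]
      simpa only [ne_eq, C_eq_zero] using h2

lemma ratFunc_ne₁ : (1 + RatFunc.X : RatFunc ℚ) ≠ 0 := by
  rw [← RatFunc.algebraMap_X, ← map_one (algebraMap (Polynomial ℚ) (RatFunc ℚ)), ← map_add]
  refine RatFunc.algebraMap_ne_zero ?_
  rw [add_comm]
  exact Polynomial.X_add_C_ne_zero 1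

lemma ratFunc_ne₂ : (1 - RatFunc.X : RatFunc ℚ) ≠ 0 := by
  rw [← RatFunc.algebraMap_X, ← map_one (algebraMap (Polynomial ℚ) (RatFunc ℚ)), ← map_sub]
  refine RatFunc.algebraMap_ne_zero ?_
  rw [← neg_sub, neg_ne_zero]
  exact Polynomial.X_sub_C_ne_zero 1

end Helpers

open MvPolynomial in
/-- Theorem: implicit equations of the QS_t model: over the field
`K = ℚ(t)` of rational functions, the kernel of the ring map
`p_{ij} ↦ x_{{i,j}}·(1 + a_i − t·a_j)` (from the polynomial ring in the doubled
edge variables of a graph `G` to the polynomial ring in the edge variables `x`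
and vertex variables `a`) is generated by the cycle polynomials `P^C`, where
`C` runs over all cycles of `G`. -/
theorem qs_t_ideal_generated_by_cycle_polys (I : ℕ)
    (G : SimpleGraph (Fin I)) [DecidableRel G.Adj] :
    RingHom.ker
      ((aeval (R := RatFunc ℚ)
          (fun e : {e : Fin I × Fin I // G.Adj e.1 e.2} =>
            (X (Sum.inl s(e.1.1, e.1.2)) *
              (1 + X (Sum.inr e.1.1) - C RatFunc.X * X (Sum.inr e.1.2)) :
              MvPolynomial (Sym2 (Fin I) ⊕ Fin I) (RatFunc ℚ)))).toRingHom)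
    = Ideal.span
        { P : MvPolynomial {e : Fin I × Fin I // G.Adj e.1 e.2} (RatFunc ℚ) |
          ∃ (n : ℕ) (_ : 3 ≤ n) (v : Fin n → Fin I),
            Function.Injective v ∧ (∀ k, G.Adj (v k) (v (cycSucc k))) ∧
            P = cyclePoly (C RatFunc.X) n v
                  (fun i j =>
                    if h : G.Adj i j then X ⟨(i, j), h⟩ else 0) } := by
    exact qs_general G RatFunc.X ratFunc_ne₁ ratFunc_ne₂
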